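/- arXiv:2512.09722 — 2 statements merged into one kernel-verified Lean document; each statement's English description precedes it below -/
import Mathlib

section
/- Let p ≥ 1 be an integer and k ≥ 2 an integer. Then the double sum over ℓ from 2 to k and over m from 0 to 2p−2 of (−1)^m · C(ℓ+m−2, m)/(k+m−1)! · C(ℓ+2p−m−4, 2p−m−2)/(k+2p−m−3)! equals 2·p!/((2p)!·(k−2)!·(p+k−2)!), where C(a,b) denotes the binomial coefficient. -/
/-!
With `a = ℓ - 2`, `K = k - 2` and `q = p - 1`, the inner sum is, up to the factor `(K + 1)! ^ 2`,
the coefficient of `t ^ (2 q)` in `M(-t) M(t)`, where `M(t) = ₁F₁(x; y; t)`, `x = a + 1`,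
`y = K + 2`. As a function of `x` this coefficient is a polynomial of degree at most `2 q`, a linear
combination of the products `(x)_i (x)_j` with `i + j = 2 q`. These all vanish at
`x = 0, -1, …, -(q - 1)`, and only `i = j = q` survives at `x = -q`. The coefficient is moreover
invariant under `x ↦ y - x`, by Kummer's transformation `₁F₁(x; y; t) = exp(t) ₁F₁(y - x; y; -t)`.
This determines it: it equals `(x)_q (y - x)_q / (q! (y)_q (y)_{2q})`, a case of Dixon's theorem.
For `x = a + 1` that is a multiple of `C(a + q, q) C(K - a + q, q)`, and the sum over `a` is a
Vandermonde convolution.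
-/

open Polynomial Finset
open scoped Nat PowerSeries

section Pochhammer

lemma ascPochhammer_eval_mul_eval_add {R : Type*} [CommSemiring R] (y : R) (m n : ℕ) :
    (ascPochhammer R m).eval y * (ascPochhammer R n).eval (y + m) =
      (ascPochhammer R (m + n)).eval y := by
  simp [← ascPochhammer_mul]

lemma ascPochhammer_eval_neg_self {R : Type*} [Ring R] (n : ℕ) :
    (ascPochhammer R n).eval (-(n : R)) = (-1) ^ n * n ! := by
  rw [ascPochhammer_eval_neg_eq_descPochhammer, descPochhammer_eval_eq_descFactorial,
    Nat.descFactorial_self]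

lemma ascPochhammer_eval_ne_zero {R : Type*} [Ring R] [IsDomain R] {y : R}
    (hy : ∀ n : ℕ, y + n ≠ 0) (n : ℕ) : (ascPochhammer R n).eval y ≠ 0 := by
  rw [Ne, ascPochhammer_eval_eq_zero_iff]
  rintro ⟨i, -, hi⟩
  exact hy i (by rw [hi, add_neg_cancel])

/-- Vandermonde's convolution for `(x - y) + (y + n - 1)`, rewritten in rising factorials. -/
lemma ascPochhammer_eval_eq_sum_choose {R : Type*} [CommRing R] (x y : R) (n : ℕ) :
    (ascPochhammer R n).eval x = ∑ ij ∈ antidiagonal n, (n.choose ij.1 : R) *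
      ((-1) ^ ij.2 * (ascPochhammer R ij.2).eval (y - x) *
        (ascPochhammer R ij.1).eval (y + ij.2)) := by
  have vandermonde := Ring.descPochhammer_smeval_add n (Commute.all (y + n - 1) (x - y))
  have smeval_eq (m : ℕ) (r : R) :
      (descPochhammer ℤ m).smeval r = (ascPochhammer R m).eval (r - m + 1) := by
    rw [Polynomial.descPochhammer_smeval_eq_ascPochhammer, Polynomial.ascPochhammer_smeval_eq_eval]
  have eval_reflect (m : ℕ) :
      (ascPochhammer R m).eval (x - y - m + 1) = (-1) ^ m * (ascPochhammer R m).eval (y - x) := by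
    rw [← descPochhammer_eval_eq_ascPochhammer, ← neg_sub x y,
      ascPochhammer_eval_neg_eq_descPochhammer, ← mul_assoc, ← mul_pow]
    simp
  simp only [smeval_eq, eval_reflect] at vandermonde
  convert vandermonde using 2 with ij hij
  · ring
  · rw [← mem_antidiagonal.1 hij]
    push_cast
    ring_nf

end Pochhammer

section Kummer

variable {F : Type*} [Field F]

/-- Kummer's confluent hypergeometric function `₁F₁(x; y; t)` as a formal power series in `t`.
Division by zero makes the coefficients `0` from the point where `(y)_n` vanishes on. -/
noncomputable def kummerSeries (x y : F) : F⟦X⟧ :=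
  PowerSeries.mk fun n ↦ (ascPochhammer F n).eval x / (n ! * (ascPochhammer F n).eval y)

lemma coeff_kummerSeries (x y : F) (n : ℕ) :
    PowerSeries.coeff n (kummerSeries x y) =
      (ascPochhammer F n).eval x / (n ! * (ascPochhammer F n).eval y) :=
  PowerSeries.coeff_mk _ _

lemma coeff_evalNegHom_kummerSeries (x y : F) (n : ℕ) :
    PowerSeries.coeff n (PowerSeries.evalNegHom (kummerSeries x y)) =
      (-1) ^ n * ((ascPochhammer F n).eval x / (n ! * (ascPochhammer F n).eval y)) := by
  rw [PowerSeries.evalNegHom, PowerSeries.coeff_rescale, coeff_kummerSeries]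

/-- The coefficient of `t ^ n` in `₁F₁(x; y; -t) ₁F₁(x; y; t)`, as a polynomial in `x`. -/
noncomputable def kummerProductCoeff (y : F) (n : ℕ) : F[X] :=
  ∑ ij ∈ antidiagonal n,
    C ((-1) ^ ij.1 / (ij.1 ! * (ascPochhammer F ij.1).eval y *
      (ij.2 ! * (ascPochhammer F ij.2).eval y))) * (ascPochhammer F ij.1 * ascPochhammer F ij.2)

lemma eval_kummerProductCoeff (x y : F) (n : ℕ) :
    (kummerProductCoeff y n).eval x =
      PowerSeries.coeff n (PowerSeries.evalNegHom (kummerSeries x y) * kummerSeries x y) := by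
  simp only [kummerProductCoeff, eval_finsetSum, eval_mul, eval_C, PowerSeries.coeff_mul,
    coeff_kummerSeries, coeff_evalNegHom_kummerSeries]
  refine sum_congr rfl fun ij _ ↦ ?_
  ring

lemma natDegree_kummerProductCoeff_le (y : F) (n : ℕ) :
    (kummerProductCoeff y n).natDegree ≤ n := by
  refine natDegree_sum_le_of_forall_le _ _ fun ij hij ↦ ?_
  calc _ ≤ (ascPochhammer F ij.1 * ascPochhammer F ij.2).natDegree := natDegree_C_mul_le _ _
    _ ≤ ij.1 + ij.2 := natDegree_mul_le_of_le (ascPochhammer_natDegree F _).le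
        (ascPochhammer_natDegree F _).le
    _ = n := mem_antidiagonal.1 hij

lemma eval_kummerProductCoeff_neg_of_lt (y : F) {q j : ℕ} (hj : j < q) :
    (kummerProductCoeff y (2 * q)).eval (-(j : F)) = 0 := by
  rw [kummerProductCoeff, eval_finsetSum]
  refine sum_eq_zero fun ij hij ↦ ?_
  have hij : ij.1 + ij.2 = 2 * q := mem_antidiagonal.1 hij
  rcases (by lia : j < ij.1 ∨ j < ij.2) with h | h <;>
    simp [ascPochhammer_eval_neg_coe_nat_of_lt h]

/-- The closed form `(x)_q (y - x)_q / (q! (y)_q (y)_{2q})` of `kummerProductCoeff y (2 * q)`, as a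
polynomial in `x`. -/
noncomputable def dixonPolynomial (y : F) (q : ℕ) : F[X] :=
  C (q ! * (ascPochhammer F q).eval y * (ascPochhammer F (2 * q)).eval y)⁻¹ *
    (ascPochhammer F q * (ascPochhammer F q).comp (C y - X))

lemma eval_dixonPolynomial (x y : F) (q : ℕ) :
    (dixonPolynomial y q).eval x =
      (ascPochhammer F q).eval x * (ascPochhammer F q).eval (y - x) /
        (q ! * (ascPochhammer F q).eval y * (ascPochhammer F (2 * q)).eval y) := by
  simp [dixonPolynomial, div_eq_inv_mul]

lemma natDegree_dixonPolynomial_le (y : F) (q : ℕ) : (dixonPolynomial y q).natDegree ≤ 2 * q := by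
  have natDegree_comp_le : ((ascPochhammer F q).comp (C y - X)).natDegree ≤ q := by
    rw [natDegree_comp, ascPochhammer_natDegree]
    exact mul_le_of_le_one_right' (by compute_degree)
  calc (dixonPolynomial y q).natDegree ≤ _ := natDegree_C_mul_le _ _
    _ ≤ q + q := natDegree_mul_le_of_le (ascPochhammer_natDegree F q).le natDegree_comp_le
    _ = 2 * q := (two_mul q).symm

lemma eval_dixonPolynomial_sub (x y : F) (q : ℕ) :
    (dixonPolynomial y q).eval (y - x) = (dixonPolynomial y q).eval x := by
  rw [eval_dixonPolynomial, eval_dixonPolynomial, sub_sub_cancel, mul_comm (eval (y - x) _)]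

lemma eval_dixonPolynomial_neg_of_lt (y : F) {q j : ℕ} (hj : j < q) :
    (dixonPolynomial y q).eval (-(j : F)) = 0 := by
  rw [eval_dixonPolynomial, ascPochhammer_eval_neg_coe_nat_of_lt hj, zero_mul, zero_div]

variable [CharZero F]

lemma eval_kummerProductCoeff_neg_self (y : F) (q : ℕ) :
    (kummerProductCoeff y (2 * q)).eval (-(q : F)) =
      (-1) ^ q / (ascPochhammer F q).eval y ^ 2 := by
  rw [kummerProductCoeff, eval_finsetSum, sum_eq_single_of_mem (q, q) (by simp [two_mul])]
  · have hq : (q ! : F) ≠ 0 := by exact_mod_cast q.factorial_ne_zero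
    have sign : (((-1) ^ q) ^ 2 : F) = 1 := by rw [← pow_mul', pow_mul, neg_one_sq, one_pow]
    simp only [eval_mul, eval_C, ascPochhammer_eval_neg_self]
    field_simp
    rw [sign]
  · intro ij hij hne
    have hij : ij.1 + ij.2 = 2 * q := mem_antidiagonal.1 hij
    have hne : ij.1 ≠ q ∨ ij.2 ≠ q := by grind
    rcases (by lia : q < ij.1 ∨ q < ij.2) with h | h <;>
      simp [ascPochhammer_eval_neg_coe_nat_of_lt h]

theorem kummerSeries_eq_exp_mul_evalNegHom {y : F} (hy : ∀ n : ℕ, y + n ≠ 0) (x : F) :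
    kummerSeries x y = PowerSeries.exp F * PowerSeries.evalNegHom (kummerSeries (y - x) y) := by
  ext n
  have hyn := ascPochhammer_eval_ne_zero hy
  have hfac (m : ℕ) : (m ! : F) ≠ 0 := by exact_mod_cast m.factorial_ne_zero
  rw [PowerSeries.coeff_mul, coeff_kummerSeries, ascPochhammer_eval_eq_sum_choose x y, sum_div]
  refine sum_congr rfl fun ⟨i, j⟩ hij ↦ ?_
  obtain rfl : i + j = n := mem_antidiagonal.1 hij
  have hsplit : (ascPochhammer F (i + j)).eval y =
      (ascPochhammer F j).eval y * (ascPochhammer F i).eval (y + j) := by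
    rw [ascPochhammer_eval_mul_eval_add, add_comm]
  have hshift : (ascPochhammer F i).eval (y + j) ≠ 0 := right_ne_zero_of_mul (hsplit ▸ hyn (i + j))
  have hj := hyn j
  rw [coeff_evalNegHom_kummerSeries, PowerSeries.coeff_exp, hsplit, Nat.cast_add_choose]
  simp only [map_div₀, map_one, map_natCast]
  field_simp [hfac]

lemma evalNegHom_kummerSeries_mul_symm {y : F} (hy : ∀ n : ℕ, y + n ≠ 0) (x : F) :
    PowerSeries.evalNegHom (kummerSeries (y - x) y) * kummerSeries (y - x) y =
      PowerSeries.evalNegHom (kummerSeries x y) * kummerSeries x y := by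
  have evalNeg_evalNeg (f : F⟦X⟧) : PowerSeries.evalNegHom (PowerSeries.evalNegHom f) = f := by
    simp [PowerSeries.evalNegHom, PowerSeries.rescale_rescale]
  rw [kummerSeries_eq_exp_mul_evalNegHom hy x, map_mul, evalNeg_evalNeg]
  linear_combination -(kummerSeries (y - x) y *
    PowerSeries.evalNegHom (kummerSeries (y - x) y)) * PowerSeries.exp_mul_exp_neg_eq_one (A := F)

lemma eval_kummerProductCoeff_sub {y : F} (hy : ∀ n : ℕ, y + n ≠ 0) (x : F) (n : ℕ) :
    (kummerProductCoeff y n).eval (y - x) = (kummerProductCoeff y n).eval x := by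
  rw [eval_kummerProductCoeff, eval_kummerProductCoeff, evalNegHom_kummerSeries_mul_symm hy]

lemma eq_zero_of_eval_sub_eq_of_eval_neg_eq_zero {y : F} (hy : ∀ n : ℕ, y + n ≠ 0) {P : F[X]}
    {n : ℕ} (hdeg : P.natDegree < 2 * n) (hsymm : ∀ x, P.eval (y - x) = P.eval x)
    (hroot : ∀ j < n, P.eval (-(j : F)) = 0) : P = 0 := by
  let root : Fin n ⊕ Fin n → F := Sum.elim (fun i ↦ -(i : F)) (fun i ↦ y - -(i : F))
  have root_injective : Function.Injective root := by
    refine Function.Injective.sumElim ?_ ?_ fun i j hij ↦ ?_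
    · intro i j hij
      simpa [Fin.ext_iff] using hij
    · intro i j hij
      simpa [Fin.ext_iff] using hij
    · apply hy (j + i)
      push_cast
      linear_combination -hij
  refine eq_zero_of_natDegree_lt_card_of_eval_eq_zero P root_injective ?_ (by simpa [← two_mul])
  rintro (i | i)
  · exact hroot i i.isLt
  · exact (hsymm _).trans (hroot i i.isLt)

lemma eval_dixonPolynomial_neg_self {y : F} (hy : ∀ n : ℕ, y + n ≠ 0) (q : ℕ) :
    (dixonPolynomial y q).eval (-(q : F)) = (-1) ^ q / (ascPochhammer F q).eval y ^ 2 := by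
  have hfac : (q ! : F) ≠ 0 := by exact_mod_cast q.factorial_ne_zero
  have hsplit := ascPochhammer_eval_mul_eval_add y q q
  have hyq := ascPochhammer_eval_ne_zero hy q
  have hshift : (ascPochhammer F q).eval (y + q) ≠ 0 :=
    right_ne_zero_of_mul (hsplit ▸ ascPochhammer_eval_ne_zero hy (q + q))
  rw [eval_dixonPolynomial, ascPochhammer_eval_neg_self, sub_neg_eq_add, two_mul, ← hsplit]
  field_simp

theorem kummerProductCoeff_two_mul {y : F} (hy : ∀ n : ℕ, y + n ≠ 0) (q : ℕ) :
    kummerProductCoeff y (2 * q) = dixonPolynomial y q := by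
  rw [← sub_eq_zero]
  refine eq_zero_of_eval_sub_eq_of_eval_neg_eq_zero hy (n := q + 1) ?_ (fun x ↦ ?_) fun j hj ↦ ?_
  · calc (kummerProductCoeff y (2 * q) - dixonPolynomial y q).natDegree
        ≤ max (2 * q) (2 * q) := natDegree_sub_le_of_le (natDegree_kummerProductCoeff_le y _)
          (natDegree_dixonPolynomial_le y q)
      _ < 2 * (q + 1) := by lia
  · rw [eval_sub, eval_sub, eval_kummerProductCoeff_sub hy, eval_dixonPolynomial_sub]
  · rw [eval_sub, sub_eq_zero]
    rcases Nat.lt_succ_iff_lt_or_eq.1 hj with hj | rfl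
    · rw [eval_kummerProductCoeff_neg_of_lt y hj, eval_dixonPolynomial_neg_of_lt y hj]
    · rw [eval_kummerProductCoeff_neg_self, eval_dixonPolynomial_neg_self hy]

end Kummer

section NaturalParameters

variable {F : Type*} [Field F] [CharZero F]

lemma ascPochhammer_eval_natCast_add_one (a n : ℕ) :
    (ascPochhammer F n).eval (a + 1 : F) = (a + n)! / a ! := by
  rw [eq_div_iff (by exact_mod_cast a.factorial_ne_zero), mul_comm, factorial_mul_ascPochhammer]

lemma natCast_add_choose_right (a n : ℕ) :
    ((a + n).choose n : F) = (a + n)! / (a ! * n !) := by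
  rw [add_comm a n, Nat.cast_add_choose, mul_comm (n ! : F)]

theorem sum_antidiagonal_neg_one_pow_mul_choose_div_factorial (a b q : ℕ) :
    ∑ ij ∈ antidiagonal (2 * q), (-1 : F) ^ ij.1 *
        (((a + ij.1).choose ij.1 / (a + b + 1 + ij.1)!) *
          ((a + ij.2).choose ij.2 / (a + b + 1 + ij.2)!)) =
      q ! / ((a + b + 1 + q)! * (a + b + 1 + 2 * q)!) *
        ((q + a).choose q * (q + b).choose q) := by
  have hfac (n : ℕ) : (n ! : F) ≠ 0 := by exact_mod_cast n.factorial_ne_zero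
  have hy (n : ℕ) : ((a + b + 1 : ℕ) + 1 : F) + n ≠ 0 := by norm_cast; lia
  have hsub : ((a + b + 1 : ℕ) + 1 : F) - (a + 1) = b + 1 := by push_cast; ring
  have dixon := congrArg (eval (a + 1 : F)) (kummerProductCoeff_two_mul hy q)
  rw [kummerProductCoeff, eval_finsetSum, eval_dixonPolynomial, hsub] at dixon
  simp only [eval_mul, eval_C, ascPochhammer_eval_natCast_add_one] at dixon
  calc _ = (((a + b + 1)! : F) ^ 2)⁻¹ * _ := ?_
    _ = _ := congrArg _ dixon
    _ = _ := ?_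
  · rw [mul_sum]
    refine sum_congr rfl fun ij _ ↦ ?_
    rw [natCast_add_choose_right, natCast_add_choose_right]
    field_simp [hfac]
  · rw [Nat.cast_add_choose, Nat.cast_add_choose, add_comm q a, add_comm q b]
    field_simp [hfac]

theorem sum_antidiagonal_add_choose_mul_add_choose (p q n : ℕ) :
    ∑ ij ∈ antidiagonal n, (p + ij.1).choose p * (q + ij.2).choose q =
      (p + q + 1 + n).choose (p + q + 1) := by
  have series_mul : (PowerSeries.invOneSubPow ℤ (p + 1)).val *
      (PowerSeries.invOneSubPow ℤ (q + 1)).val =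
        (PowerSeries.invOneSubPow ℤ (p + q + 1 + 1)).val := by
    rw [← Units.val_mul, ← PowerSeries.invOneSubPow_add,
      show p + 1 + (q + 1) = p + q + 1 + 1 by ring]
  have coeff_eq := congrArg (PowerSeries.coeff n) series_mul
  simp only [PowerSeries.coeff_mul, PowerSeries.invOneSubPow_val_succ_eq_mk_add_choose,
    PowerSeries.coeff_mk] at coeff_eq
  exact_mod_cast coeff_eq

theorem sum_antidiagonal_sum_antidiagonal_choose_div_factorial (K q : ℕ) :
    ∑ ab ∈ antidiagonal K, ∑ ij ∈ antidiagonal (2 * q), (-1 : F) ^ ij.1 *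
        (((ab.1 + ij.1).choose ij.1 / (K + 1 + ij.1)!) *
          ((ab.1 + ij.2).choose ij.2 / (K + 1 + ij.2)!)) =
      2 * (q + 1)! / ((2 * (q + 1))! * K ! * (K + 1 + q)!) := by
  have hfac (n : ℕ) : (n ! : F) ≠ 0 := by exact_mod_cast n.factorial_ne_zero
  have hq : (2 * q + 1 + 1 : F) ≠ 0 := by norm_cast
  calc _ = ∑ ab ∈ antidiagonal K, (q ! : F) / ((K + 1 + q)! * (K + 1 + 2 * q)!) *
        ((q + ab.1).choose q * (q + ab.2).choose q) := sum_congr rfl fun ab hab ↦ by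
          rw [← mem_antidiagonal.1 hab, sum_antidiagonal_neg_one_pow_mul_choose_div_factorial]
    _ = q ! / ((K + 1 + q)! * (K + 1 + 2 * q)!) * (q + q + 1 + K).choose (q + q + 1) := by
          rw [← mul_sum, ← sum_antidiagonal_add_choose_mul_add_choose]
          push_cast
          rfl
    _ = _ := by
          rw [Nat.cast_add_choose, ← two_mul, mul_add_one, Nat.factorial_succ (2 * q + 1),
            Nat.factorial_succ q, show 2 * q + 1 + K = K + 1 + 2 * q by ring]
          push_cast
          field_simp [hfac]
          ring

end NaturalParameters

/-- **Summation identity (Lemma 5.4).** For integers `p ≥ 1` and `k ≥ 2`,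
`∑_{ℓ=2}^k ∑_{m=0}^{2p−2} (−1)^m C(ℓ+m−2,m)/(k+m−1)! · C(ℓ+2p−m−4,2p−m−2)/(k+2p−m−3)!
  = 2·p!/((2p)!·(k−2)!·(p+k−2)!)`. -/
theorem stmt_0 (p k : ℕ) (hp : 1 ≤ p) (hk : 2 ≤ k) :
    ∑ l ∈ Finset.Icc 2 k, ∑ m ∈ Finset.range (2*p - 1),
        (-1:ℝ)^m * ((l+m-2).choose m : ℝ) / ((k+m-1).factorial : ℝ)
          * ((l+2*p-m-4).choose (2*p-m-2) : ℝ) / ((k+2*p-m-3).factorial : ℝ)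
      = 2 * (p.factorial : ℝ)
          / (((2*p).factorial : ℝ) * ((k-2).factorial : ℝ) * ((p+k-2).factorial : ℝ)) := by
  obtain ⟨q, rfl⟩ := Nat.exists_eq_add_of_le' hp
  obtain ⟨K, rfl⟩ := Nat.exists_eq_add_of_le' hk
  rw [show q + 1 + (K + 2) - 2 = K + 1 + q by lia, Nat.add_sub_cancel,
    ← sum_antidiagonal_sum_antidiagonal_choose_div_factorial,
    Nat.sum_antidiagonal_eq_sum_range_succ_mk, ← Ico_add_one_right_eq_Icc,
    sum_Ico_eq_sum_range]
  refine sum_congr (by congr 1) fun a _ ↦ ?_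
  rw [Nat.sum_antidiagonal_eq_sum_range_succ_mk]
  refine sum_congr (by congr 1) fun m hm ↦ ?_
  obtain ⟨n, hn⟩ := Nat.exists_eq_add_of_le (mem_range_succ_iff.1 hm)
  rw [show 2 + a + m - 2 = a + m by lia, show K + 2 + m - 1 = K + 1 + m by lia,
    show 2 + a + 2 * (q + 1) - m - 4 = a + n by lia, show 2 * (q + 1) - m - 2 = n by lia,
    show K + 2 + 2 * (q + 1) - m - 3 = K + 1 + n by lia, show 2 * q - m = n by lia]
  ring
end

section
/- Let p ≥ 1 be an integer, let 0 ≤ α₁ ≤ β₁ ≤ α₂ ≤ β₂ ≤ ⋯ ≤ α_p ≤ β_p ≤ π be real numbers, and let u ∈ (0, 1/2). Then (1/π) · ∫₀^π [∏_{i=1}^p (sin(αᵢ−γ)/sin(βᵢ−γ))^{2u} · 1{γ ∉ [αᵢ,βᵢ]}] dγ = sin(2u·(π − ∑_{i=1}^p (βᵢ−αᵢ))) / sin(2πu). Here the integrand is taken to be 0 whenever γ lies in one of the intervals [αᵢ,βᵢ], and on the complement of these intervals each ratio sin(αᵢ−γ)/sin(βᵢ−γ) is positive, so the real power (·)^{2u}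 is well defined. -/
open Real

open Set Filter Topology MeasureTheory
open scoped Function

/-!
With `s = 2u`, the function `F z = ∏ᵢ ((1 - z e^{-2iαᵢ}) / (1 - z e^{-2iβᵢ}))^s` is holomorphic on
the unit disc and `F 0 = 1`, so the mean value property, pushed to the boundary by dominated
convergence, gives `(1/π) ∫₀^π F (e^{2iγ}) dγ = 1`. Write `L = ∑ᵢ (βᵢ - αᵢ)`. Since
`1 - e^{2ix} = 2 |sin x| e^{i(x ∓ π/2)}` for `0 < ±x < π`, the modulus of `F (e^{2iγ})` is
`∏ᵢ |sin (αᵢ - γ) / sin (βᵢ - γ)|^s`, and its phase is `sL` off the intervals `[αᵢ, βᵢ]` and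
`s(L - π)` on them. Multiplying by `e^{is(π - L)}` therefore makes `F` real on the intervals and
turns its phase elsewhere into `sπ`: the imaginary part of the product is `sin (sπ)` times the
integrand, while its mean is `sin (s(π - L))`.
-/

lemma locallyIntegrable_mul_of_continuousAt_or {X 𝕜 : Type*} [TopologicalSpace X]
    [MeasurableSpace X] [OpensMeasurableSpace X] [SecondCountableTopology X] [NormedField 𝕜]
    {μ : Measure X} {f g : X → 𝕜} (hf : LocallyIntegrable f μ) (hg : LocallyIntegrable g μ)
    (hfg : ∀ x, ContinuousAt f x ∨ ContinuousAt g x) :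
    LocallyIntegrable (fun x ↦ f x * g x) μ := by
  have integrableAt_mul {f g : X → 𝕜} (hf : LocallyIntegrable f μ) (hg : LocallyIntegrable g μ)
      {x : X} (hfx : ContinuousAt f x) : IntegrableAtFilter (fun x ↦ f x * g x) (𝓝 x) μ := by
    obtain ⟨s, hs, hgs⟩ := hg x
    obtain ⟨t, hts, ht_open, hxt⟩ := mem_nhds_iff.mp
      (inter_mem hs (hfx.norm.eventually_le_const (lt_add_one ‖f x‖)))
    refine ⟨t, ht_open.mem_nhds hxt, ?_⟩
    exact (hgs.mono_set fun y hy ↦ (hts hy).1).bdd_mul hf.aestronglyMeasurable.restrict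
      (ae_restrict_of_forall_mem ht_open.measurableSet fun y hy ↦ (hts hy).2)
  intro x
  rcases hfg x with hfx | hgx
  · exact integrableAt_mul hf hg hfx
  · simpa only [mul_comm] using integrableAt_mul hg hf hgx

lemma intervalIntegrable_abs_rpow {r : ℝ} (hr : -1 < r) (a b : ℝ) :
    IntervalIntegrable (fun x : ℝ ↦ |x| ^ r) volume a b := by
  refine intervalIntegrable_of_even (fun x ↦ by rw [abs_neg]) fun x hx ↦ ?_
  refine (intervalIntegral.intervalIntegrable_rpow' hr).congr fun y hy ↦ ?_
  rw [uIoc_of_le hx.le] at hy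
  simp only [abs_of_pos hy.1]

lemma sinc_pos_of_abs_lt_pi {x : ℝ} (hx : |x| < π) : 0 < sinc x := by
  rcases eq_or_ne x 0 with rfl | hx0
  · simp
  rw [sinc_of_ne_zero hx0]
  rcases lt_or_gt_of_ne hx0 with h | h
  · exact div_pos_of_neg_of_neg (sin_neg_of_neg_of_neg_pi_lt h (abs_lt.mp hx).1) h
  · exact div_pos (sin_pos_of_pos_of_lt_pi h (abs_lt.mp hx).2) h

lemma mul_sinc (x : ℝ) : x * sinc x = sin x := by
  rcases eq_or_ne x 0 with rfl | hx
  · simp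
  · rw [sinc_of_ne_zero hx, mul_div_cancel₀ _ hx]

lemma locallyIntegrable_abs_sin_sub_rpow {r : ℝ} (hr : -1 < r) (b : ℝ) :
    LocallyIntegrable (fun γ : ℝ ↦ |sin (γ - b)| ^ r) := by
  have periodic : Function.Periodic (fun x : ℝ ↦ |sin x| ^ r) π := fun x ↦ by
    simp only [sin_add_pi, abs_neg]
  have one_period :
      IntervalIntegrable (fun x : ℝ ↦ |sin x| ^ r) volume (-(π / 2)) (-(π / 2) + π) := by
    have hsinc : ContinuousOn (fun x : ℝ ↦ |sinc x| ^ r) (uIcc (-(π / 2)) (-(π / 2) + π)) := by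
      refine continuous_sinc.abs.continuousOn.rpow_const fun x hx ↦ .inl ?_
      rw [uIcc_of_le (by linarith [pi_pos])] at hx
      refine abs_ne_zero.mpr (sinc_pos_of_abs_lt_pi (abs_lt.mpr ⟨?_, ?_⟩)).ne' <;>
        linarith [hx.1, hx.2, pi_pos]
    refine ((intervalIntegrable_abs_rpow hr _ _).mul_continuousOn hsinc).congr fun x _ ↦ ?_
    simp only [← mul_rpow (abs_nonneg _) (abs_nonneg _), ← abs_mul, mul_sinc]
  intro γ
  have h_near :=
    (periodic.intervalIntegrable pi_ne_zero one_period (γ - 1 - b) (γ + 1 - b)).comp_sub_right b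
  rw [sub_add_cancel, sub_add_cancel,
    intervalIntegrable_iff_integrableOn_Icc_of_le (by linarith)] at h_near
  exact ⟨_, Icc_mem_nhds (by linarith) (by linarith), h_near⟩

lemma locallyIntegrable_prod_abs_sin_sub_rpow {ι : Type*} {r : ℝ} (hr : -1 < r) {b : ι → ℝ}
    {T : Finset ι} (hT : (T : Set ι).Pairwise fun i j ↦ sin (b i - b j) ≠ 0) :
    LocallyIntegrable (fun γ : ℝ ↦ ∏ i ∈ T, |sin (γ - b i)| ^ r) := by
  classical
  have continuousAt_factor {γ : ℝ} {i : ι} (h : sin (γ - b i) ≠ 0) :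
      ContinuousAt (fun γ : ℝ ↦ |sin (γ - b i)| ^ r) γ :=
    ContinuousAt.rpow_const (by fun_prop) (.inl (abs_ne_zero.mpr h))
  induction T using Finset.induction_on with
  | empty => simpa using locallyIntegrable_const (1 : ℝ)
  | insert j T hj ih =>
    rw [Finset.coe_insert, Set.pairwise_insert_of_notMem (by exact_mod_cast hj)] at hT
    simp only [Finset.prod_insert hj]
    refine locallyIntegrable_mul_of_continuousAt_or (locallyIntegrable_abs_sin_sub_rpow hr _)
      (ih hT.1) fun γ ↦ ?_
    by_cases hγj : sin (γ - b j) = 0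
    · refine .inr (tendsto_finsetProd _ fun i hi ↦ continuousAt_factor fun hγi ↦ ?_)
      refine (hT.2 i hi).1 ?_
      rw [← sub_sub_sub_cancel_left _ _ γ, sin_sub, hγi, hγj, zero_mul, mul_zero, sub_zero]
    · exact .inl (continuousAt_factor hγj)

lemma circleAverage_eq_integral_two_mul {E : Type*} [NormedAddCommGroup E] [NormedSpace ℝ E]
    (f : ℂ → E) (c : ℂ) (R : ℝ) :
    circleAverage f c R = π⁻¹ • ∫ γ in (0 : ℝ)..π, f (circleMap c R (2 * γ)) := by
  rw [circleAverage_def, intervalIntegral.integral_comp_mul_left (fun θ ↦ f (circleMap c R θ))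
    two_ne_zero, smul_smul, mul_zero, mul_inv_rev]

lemma circleAverage_eq_of_dominated {E : Type*} [NormedAddCommGroup E] [NormedSpace ℂ E]
    [CompleteSpace E] {f : ℂ → E} {c : ℂ} {R : ℝ} {bound : ℝ → ℝ} (hR : 0 < R)
    (hf : DifferentiableOn ℂ f (Metric.ball c R))
    (h_bound : ∀ r ∈ Ioo 0 R, ∀ᵐ γ : ℝ, ‖f (circleMap c r (2 * γ))‖ ≤ bound γ)
    (h_int : IntervalIntegrable bound volume 0 π)
    (h_cont : ∀ᵐ γ : ℝ, ContinuousAt f (circleMap c R (2 * γ))) :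
    circleAverage f c R = f c := by
  have h_radii : ∀ᶠ r in 𝓝[<] R, r ∈ Ioo 0 R := Ioo_mem_nhdsLT hR
  have closedBall_subset {r : ℝ} (hr : r ∈ Ioo 0 R) : Metric.closedBall c r ⊆ Metric.ball c R :=
    Metric.closedBall_subset_ball hr.2
  have h_average : ∀ r ∈ Ioo 0 R, circleAverage f c r = f c := fun r hr ↦ by
    refine DiffContOnCl.circleAverage (hf.diffContOnCl_ball ?_)
    rw [abs_of_pos hr.1]
    exact closedBall_subset hr
  have h_meas : ∀ r ∈ Ioo 0 R, Continuous fun γ : ℝ ↦ f (circleMap c r (2 * γ)) := fun r hr ↦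
    (hf.continuousOn.mono (closedBall_subset hr)).comp_continuous (by fun_prop)
      fun γ ↦ circleMap_mem_closedBall c hr.1.le _
  have h_lim : Tendsto (fun r ↦ circleAverage f c r) (𝓝[<] R) (𝓝 (circleAverage f c R)) := by
    simp only [circleAverage_eq_integral_two_mul]
    refine (intervalIntegral.tendsto_integral_filter_of_dominated_convergence bound ?_ ?_ h_int
      ?_).const_smul _
    · exact h_radii.mono fun r hr ↦ (h_meas r hr).aestronglyMeasurable
    · exact h_radii.mono fun r hr ↦ (h_bound r hr).mono fun γ hγ _ ↦ hγ
    · refine h_cont.mono fun γ hγ _ ↦ hγ.tendsto.comp (tendsto_nhdsWithin_of_tendsto_nhds ?_)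
      exact Continuous.tendsto (by unfold circleMap; fun_prop) R
  exact tendsto_nhds_unique h_lim
    (tendsto_const_nhds.congr' (h_radii.mono fun r hr ↦ (h_average r hr).symm))

lemma sin_sub_div_sin_sub_pos {a b γ : ℝ} (hγ : γ ∈ Ioo 0 π) (ha : 0 ≤ a) (hab : a ≤ b)
    (hb : b ≤ π) (hγab : γ ∉ Icc a b) : 0 < sin (a - γ) / sin (b - γ) := by
  rcases lt_or_ge γ a with hγa | haγ
  · exact div_pos (sin_pos_of_pos_of_lt_pi (by linarith) (by linarith [hγ.1]))
      (sin_pos_of_pos_of_lt_pi (by linarith) (by linarith [hγ.1]))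
  · have hbγ : b < γ := lt_of_not_ge fun h ↦ hγab ⟨haγ, h⟩
    exact div_pos_of_neg_of_neg (sin_neg_of_neg_of_neg_pi_lt (by linarith) (by linarith [hγ.2]))
      (sin_neg_of_neg_of_neg_pi_lt (by linarith) (by linarith [hγ.2]))

lemma pairwise_sin_sub_ne_zero {ι : Type*} {α β : ι → ℝ} (h0 : ∀ i, 0 ≤ α i)
    (hπ : ∀ i, β i ≤ π) (hdisj : Pairwise (Disjoint on fun i ↦ Ioo (α i) (β i))) :
    {i | α i < β i}.Pairwise fun i j ↦ sin (β i - β j) ≠ 0 := by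
  intro i (hi : α i < β i) j (hj : α j < β j) hij hsin
  have hβ : β i - β j = 0 := (sin_eq_zero_iff_of_lt_of_lt (by linarith [h0 i, hπ j])
    (by linarith [h0 j, hπ i])).mp hsin
  have hdisj_ij := Ioo_disjoint_Ioo.mp (hdisj hij)
  rw [← sub_eq_zero.mp hβ, min_self, le_max_iff] at hdisj_ij
  rcases hdisj_ij with h | h <;> linarith

lemma ae_sin_sub_ne_zero (b : ℝ) : ∀ᵐ γ : ℝ, sin (γ - b) ≠ 0 := by
  refine ((countable_range fun n : ℤ ↦ n * π + b).ae_notMem volume).mono fun γ hγ h ↦ hγ ?_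
  obtain ⟨n, hn⟩ := sin_eq_zero_iff.mp h
  exact ⟨n, by simp only [hn, sub_add_cancel]⟩

lemma one_sub_circleMap_two_mul (x : ℝ) :
    1 - circleMap 0 1 (2 * x) = (2 * sin x : ℝ) * Complex.exp ((x - π / 2 : ℝ) * Complex.I) := by
  apply Complex.ext
  · simp only [circleMap_zero, Complex.ofReal_one, one_mul, Complex.sub_re, Complex.one_re,
      Complex.exp_ofReal_mul_I_re, Complex.re_ofReal_mul, cos_sub_pi_div_two, cos_two_mul, cos_sq']
    ring
  · simp only [circleMap_zero, Complex.ofReal_one, one_mul, Complex.sub_im, Complex.one_im,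
      Complex.exp_ofReal_mul_I_im, Complex.im_ofReal_mul, sin_sub_pi_div_two, sin_two_mul]
    ring

lemma one_sub_circleMap_two_mul_of_abs_lt_pi {x : ℝ} (hx : |x| < π) :
    1 - circleMap 0 1 (2 * x) =
      (2 * |sin x| : ℝ) * Complex.exp ((x - Real.sign x * (π / 2) : ℝ) * Complex.I) := by
  rw [one_sub_circleMap_two_mul]
  rcases lt_trichotomy x 0 with hneg | rfl | hpos
  · have hsin := sin_neg_of_neg_of_neg_pi_lt hneg (abs_lt.mp hx).1
    have hphase : ((x - Real.sign x * (π / 2) : ℝ) : ℂ) * Complex.I =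
        (x - π / 2 : ℝ) * Complex.I + π * Complex.I := by
      rw [Real.sign_of_neg hneg]; push_cast; ring
    rw [abs_of_neg hsin, hphase, Complex.exp_add, Complex.exp_pi_mul_I]
    push_cast
    ring
  · simp
  · rw [abs_of_pos (sin_pos_of_pos_of_lt_pi hpos (abs_lt.mp hx).2), Real.sign_of_pos hpos, one_mul]

lemma ofReal_mul_exp_cpow {ρ θ : ℝ} (hρ : 0 < ρ) (hθ : θ ∈ Ioc (-π) π) (s : ℝ) :
    (ρ * Complex.exp (θ * Complex.I)) ^ (s : ℂ) =
      (ρ ^ s : ℝ) * Complex.exp ((s * θ : ℝ) * Complex.I) := by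
  rw [Complex.cpow_def_of_ne_zero (mul_ne_zero (by exact_mod_cast hρ.ne') (Complex.exp_ne_zero _)),
    Complex.log_ofReal_mul hρ (Complex.exp_ne_zero _), Complex.log_exp (by simpa using hθ.1)
    (by simpa using hθ.2), add_mul, Complex.exp_add, rpow_def_of_pos hρ]
  push_cast
  ring_nf

lemma abs_sin_le_norm_one_sub_circleMap {r : ℝ} (hr : 0 ≤ r) (x : ℝ) :
    |sin x| ≤ ‖1 - circleMap 0 r (2 * x)‖ := by
  have norm_sq_eq : ‖1 - circleMap 0 r (2 * x)‖ ^ 2 = (1 - r) ^ 2 + 4 * r * sin x ^ 2 := by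
    rw [Complex.sq_norm, Complex.normSq_apply]
    simp only [circleMap_zero, Complex.sub_re, Complex.sub_im, Complex.one_re, Complex.one_im,
      Complex.re_ofReal_mul, Complex.im_ofReal_mul, Complex.exp_ofReal_mul_I_re,
      Complex.exp_ofReal_mul_I_im]
    linear_combination r ^ 2 * sin_sq_add_cos_sq (2 * x) - 2 * r * cos_two_mul x
      - 4 * r * sin_sq_add_cos_sq x
  have sin_sq_le : sin x ^ 2 ≤ (1 - r) ^ 2 + 4 * r * sin x ^ 2 := by
    nlinarith [sin_sq_le_one x, sq_nonneg (1 - r), mul_nonneg hr (sq_nonneg (sin x)),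
      sq_nonneg (r * sin x)]
  exact abs_le_of_sq_le_sq (norm_sq_eq ▸ sin_sq_le) (norm_nonneg _)

lemma norm_one_sub_circleMap_le_two {r : ℝ} (hr : r ∈ Icc 0 1) (θ : ℝ) :
    ‖1 - circleMap 0 r θ‖ ≤ 2 := by
  refine (norm_sub_le _ _).trans ?_
  rw [norm_one, norm_circleMap_zero, abs_of_nonneg hr.1]
  linarith [hr.2]

lemma circleMap_zero_mul_exp_neg (r θ φ : ℝ) :
    circleMap 0 r θ * Complex.exp (-φ * Complex.I) = circleMap 0 r (θ - φ) := by
  rw [circleMap_zero, circleMap_zero, mul_assoc, ← Complex.exp_add]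
  push_cast
  ring_nf

/-- The principal branch of `(1 - z e^{-2ia})^s`, holomorphic on the unit disc; its modulus is the
`s`-th power of the distance from `z` to `e^{2ia}`. Angles are doubled so that `e^{2iγ}` runs once
around the unit circle for `γ ∈ (0, π)`. -/
noncomputable def chordPow (s a : ℝ) (z : ℂ) : ℂ :=
  (1 - z * Complex.exp (-(2 * a : ℝ) * Complex.I)) ^ (s : ℂ)

lemma chordPow_circleMap (s a r γ : ℝ) :
    chordPow s a (circleMap 0 r (2 * γ)) = (1 - circleMap 0 r (2 * (γ - a))) ^ (s : ℂ) := by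
  rw [chordPow, circleMap_zero_mul_exp_neg, ← mul_sub]

lemma chordPow_zero (s a : ℝ) : chordPow s a 0 = 1 := by simp [chordPow]

lemma measurable_chordPow (s a : ℝ) : Measurable (chordPow s a) := by
  unfold chordPow
  fun_prop

lemma one_sub_mul_exp_mem_slitPlane {z : ℂ} (hz : ‖z‖ < 1) (a : ℝ) :
    1 - z * Complex.exp (-(2 * a : ℝ) * Complex.I) ∈ Complex.slitPlane := by
  rw [sub_eq_add_neg]
  refine Complex.mem_slitPlane_of_norm_lt_one ?_
  rwa [norm_neg, norm_mul, ← Complex.ofReal_neg, Complex.norm_exp_ofReal_mul_I, mul_one]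

lemma chordPow_ne_zero {z : ℂ} (hz : ‖z‖ < 1) (s a : ℝ) : chordPow s a z ≠ 0 := by
  rw [chordPow, Complex.cpow_ne_zero_iff]
  exact .inl (Complex.slitPlane_ne_zero (one_sub_mul_exp_mem_slitPlane hz a))

lemma differentiableAt_chordPow {z : ℂ} (hz : ‖z‖ < 1) (s a : ℝ) :
    DifferentiableAt ℂ (chordPow s a) z :=
  DifferentiableAt.cpow_const (by fun_prop) (one_sub_mul_exp_mem_slitPlane hz a)

lemma continuousAt_chordPow {a γ : ℝ} (h : sin (γ - a) ≠ 0) (s : ℝ) :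
    ContinuousAt (chordPow s a) (circleMap 0 1 (2 * γ)) := by
  refine ContinuousAt.cpow (by fun_prop) continuousAt_const (.inl ?_)
  rw [circleMap_zero_mul_exp_neg, ← mul_sub, one_sub_circleMap_two_mul, Complex.re_ofReal_mul,
    Complex.exp_ofReal_mul_I_re, cos_sub_pi_div_two, mul_assoc]
  exact mul_pos two_pos (mul_self_pos.mpr h)

lemma norm_chordPow_le {r s : ℝ} (hr : r ∈ Icc 0 1) (hs : 0 ≤ s) (a γ : ℝ) :
    ‖chordPow s a (circleMap 0 r (2 * γ))‖ ≤ 2 ^ s := by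
  rw [chordPow_circleMap, Complex.norm_cpow_real]
  exact rpow_le_rpow (norm_nonneg _) (norm_one_sub_circleMap_le_two hr _) hs

lemma abs_sin_rpow_le_norm_chordPow {r s : ℝ} (hr : 0 ≤ r) (hs : 0 ≤ s) (a γ : ℝ) :
    |sin (γ - a)| ^ s ≤ ‖chordPow s a (circleMap 0 r (2 * γ))‖ := by
  rw [chordPow_circleMap, Complex.norm_cpow_real]
  exact rpow_le_rpow (abs_nonneg _) (abs_sin_le_norm_one_sub_circleMap hr _) hs

lemma chordPow_circleMap_one {a γ : ℝ} (h : |γ - a| < π) (hne : γ ≠ a) (s : ℝ) :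
    chordPow s a (circleMap 0 1 (2 * γ)) = ((2 * |sin (γ - a)|) ^ s : ℝ) *
      Complex.exp ((s * (γ - a - Real.sign (γ - a) * (π / 2)) : ℝ) * Complex.I) := by
  have hx := sub_ne_zero.mpr hne
  have hsin : sin (γ - a) ≠ 0 := fun h0 ↦
    hx ((sin_eq_zero_iff_of_lt_of_lt (abs_lt.mp h).1 (abs_lt.mp h).2).mp h0)
  rw [chordPow_circleMap, one_sub_circleMap_two_mul_of_abs_lt_pi h,
    ofReal_mul_exp_cpow (by positivity) ?_]
  obtain ⟨hl, hu⟩ := abs_lt.mp h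
  rcases lt_or_gt_of_ne hx with hneg | hpos
  · rw [Real.sign_of_neg hneg]
    constructor <;> linarith
  · rw [Real.sign_of_pos hpos]
    constructor <;> linarith

lemma sign_sub_sub_sign_sub_mul_pi_div_two {a b γ : ℝ} (hab : a ≤ b) (ha : γ ≠ a) (hb : γ ≠ b) :
    (Real.sign (γ - a) - Real.sign (γ - b)) * (π / 2) = if γ ∈ Icc a b then π else 0 := by
  rcases lt_or_gt_of_ne ha with ha | ha <;> rcases lt_or_gt_of_ne hb with hb | hb
  · rw [Real.sign_of_neg (sub_neg.mpr ha), Real.sign_of_neg (sub_neg.mpr hb),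
      if_neg fun h ↦ ha.not_ge h.1]
    ring
  · linarith
  · rw [Real.sign_of_pos (sub_pos.mpr ha), Real.sign_of_neg (sub_neg.mpr hb), if_pos ⟨ha.le, hb.le⟩]
    ring
  · rw [Real.sign_of_pos (sub_pos.mpr ha), Real.sign_of_pos (sub_pos.mpr hb),
      if_neg fun h ↦ hb.not_ge h.2]
    ring

lemma chordPow_div_chordPow_circleMap_one {a b γ : ℝ} (hab : a ≤ b) (ha : |γ - a| < π)
    (hb : |γ - b| < π) (hγa : γ ≠ a) (hγb : γ ≠ b) (s : ℝ) :
    chordPow s a (circleMap 0 1 (2 * γ)) / chordPow s b (circleMap 0 1 (2 * γ)) =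
      (|sin (a - γ) / sin (b - γ)| ^ s : ℝ) *
        Complex.exp ((s * (b - a - if γ ∈ Icc a b then π else 0) : ℝ) * Complex.I) := by
  have hmod : |sin (a - γ) / sin (b - γ)| ^ s =
      (2 * |sin (γ - a)|) ^ s / (2 * |sin (γ - b)|) ^ s := by
    rw [← div_rpow (by positivity) (by positivity), mul_div_mul_left _ _ two_ne_zero, ← abs_div,
      ← neg_sub γ a, ← neg_sub γ b, sin_neg, sin_neg, neg_div_neg_eq]
  rw [chordPow_circleMap_one ha hγa, chordPow_circleMap_one hb hγb, mul_div_mul_comm,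
    ← Complex.exp_sub, ← sub_mul, ← Complex.ofReal_sub, ← Complex.ofReal_div, hmod,
    ← sign_sub_sub_sign_sub_mul_pi_div_two hab hγa hγb]
  ring_nf

/-- The function `∏ᵢ ((1 - z e^{-2iαᵢ}) / (1 - z e^{-2iβᵢ}))^s` on the unit disc, whose phase along
the unit circle jumps at the endpoints of the arcs from `e^{2iαᵢ}` to `e^{2iβᵢ}`. -/
noncomputable def arcProd {ι : Type*} [Fintype ι] (s : ℝ) (α β : ι → ℝ) (z : ℂ) : ℂ :=
  ∏ i, chordPow s (α i) z / chordPow s (β i) z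

section ArcProd

variable {ι : Type*} [Fintype ι] {s : ℝ} {α β : ι → ℝ}

variable (s α β) in
lemma arcProd_zero : arcProd s α β 0 = 1 := by
  simp only [arcProd, chordPow_zero, div_one, Finset.prod_const_one]

lemma measurable_arcProd : Measurable (arcProd s α β) :=
  Finset.measurable_fun_prod _ fun _ _ ↦ (measurable_chordPow s _).div (measurable_chordPow s _)

lemma differentiableOn_arcProd : DifferentiableOn ℂ (arcProd s α β) (Metric.ball 0 1) := by
  intro z hz
  rw [mem_ball_zero_iff] at hz
  exact (DifferentiableAt.fun_finsetProd fun i _ ↦ (differentiableAt_chordPow hz s _).div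
    (differentiableAt_chordPow hz s _) (chordPow_ne_zero hz s _)).differentiableWithinAt

lemma ae_continuousAt_arcProd (hs : 0 ≤ s) :
    ∀ᵐ γ : ℝ, ContinuousAt (arcProd s α β) (circleMap 0 1 (2 * γ)) := by
  filter_upwards [ae_all_iff.mpr fun i ↦ ae_sin_sub_ne_zero (α i),
    ae_all_iff.mpr fun i ↦ ae_sin_sub_ne_zero (β i)] with γ hα hβ
  refine tendsto_finsetProd _ fun i _ ↦ (continuousAt_chordPow (hα i) s).div
    (continuousAt_chordPow (hβ i) s) (norm_pos_iff.mp ?_)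
  exact (rpow_pos_of_pos (abs_pos.mpr (hβ i)) s).trans_le
    (abs_sin_rpow_le_norm_chordPow zero_le_one hs _ _)

-- Factors with `αᵢ = βᵢ` are dropped from the bound: their `βᵢ` may coincide with other endpoints,
-- and the singularities would add up to a non-integrable one.
lemma norm_arcProd_le {r γ : ℝ} (hr : r ∈ Icc 0 1) (hs : 0 ≤ s) (hαβ : ∀ i, α i ≤ β i)
    (hγ : ∀ i, sin (γ - β i) ≠ 0) :
    ‖arcProd s α β (circleMap 0 r (2 * γ))‖ ≤
      ∏ i with α i < β i, 2 ^ s * |sin (γ - β i)| ^ (-s) := by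
  rw [arcProd, norm_prod, Finset.prod_filter]
  refine Finset.prod_le_prod (fun i _ ↦ norm_nonneg _) fun i _ ↦ ?_
  rw [norm_div]
  split_ifs with hi
  · rw [rpow_neg (abs_nonneg _), ← div_eq_mul_inv]
    exact div_le_div₀ (by positivity) (norm_chordPow_le hr hs _ _)
      (rpow_pos_of_pos (abs_pos.mpr (hγ i)) s) (abs_sin_rpow_le_norm_chordPow hr.1 hs _ _)
  · rw [(hαβ i).eq_of_not_lt hi]
    exact div_self_le_one _

lemma intervalIntegrable_prod_abs_sin_rpow (hs : s < 1) (h0 : ∀ i, 0 ≤ α i) (hπ : ∀ i, β i ≤ π)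
    (hdisj : Pairwise (Disjoint on fun i ↦ Ioo (α i) (β i))) (a b : ℝ) :
    IntervalIntegrable (fun γ ↦ ∏ i with α i < β i, 2 ^ s * |sin (γ - β i)| ^ (-s)) volume a b := by
  have hT : ((Finset.univ.filter fun i ↦ α i < β i : Finset ι) : Set ι).Pairwise
      fun i j ↦ sin (β i - β j) ≠ 0 := by
    simpa only [Finset.coe_filter_univ] using pairwise_sin_sub_ne_zero h0 hπ hdisj
  simp only [Finset.prod_mul_distrib]
  exact ((locallyIntegrable_prod_abs_sin_sub_rpow (by linarith) hT).integrableOn_isCompact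
    isCompact_uIcc).intervalIntegrable.const_mul _

lemma circleAverage_arcProd (hs : s ∈ Ioo 0 1) (h0 : ∀ i, 0 ≤ α i) (hαβ : ∀ i, α i ≤ β i)
    (hπ : ∀ i, β i ≤ π) (hdisj : Pairwise (Disjoint on fun i ↦ Ioo (α i) (β i))) :
    circleAverage (arcProd s α β) 0 1 = 1 := by
  rw [← arcProd_zero s α β]
  refine circleAverage_eq_of_dominated one_pos differentiableOn_arcProd (fun r hr ↦ ?_)
    (intervalIntegrable_prod_abs_sin_rpow hs.2 h0 hπ hdisj 0 π) (ae_continuousAt_arcProd hs.1.le)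
  filter_upwards [ae_all_iff.mpr fun i ↦ ae_sin_sub_ne_zero (β i)] with γ hγ
  exact norm_arcProd_le (Ioo_subset_Icc_self hr) hs.1.le hαβ hγ

lemma intervalIntegrable_arcProd (hs : s ∈ Ioo 0 1) (h0 : ∀ i, 0 ≤ α i) (hαβ : ∀ i, α i ≤ β i)
    (hπ : ∀ i, β i ≤ π) (hdisj : Pairwise (Disjoint on fun i ↦ Ioo (α i) (β i))) (a b : ℝ) :
    IntervalIntegrable (fun γ : ℝ ↦ arcProd s α β (circleMap 0 1 (2 * γ))) volume a b := by
  refine (intervalIntegrable_prod_abs_sin_rpow hs.2 h0 hπ hdisj a b).mono_fun'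
    (measurable_arcProd.comp (by fun_prop)).aestronglyMeasurable (ae_restrict_of_ae ?_)
  filter_upwards [ae_all_iff.mpr fun i ↦ ae_sin_sub_ne_zero (β i)] with γ hγ
  exact norm_arcProd_le (right_mem_Icc.mpr zero_le_one) hs.1.le hαβ hγ

lemma arcProd_circleMap_one {γ : ℝ} (hγ : γ ∈ Ioo 0 π) (h0 : ∀ i, 0 ≤ α i)
    (hαβ : ∀ i, α i ≤ β i) (hπ : ∀ i, β i ≤ π) (hγα : ∀ i, γ ≠ α i) (hγβ : ∀ i, γ ≠ β i) :
    arcProd s α β (circleMap 0 1 (2 * γ)) =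
      (∏ i, |sin (α i - γ) / sin (β i - γ)| ^ s : ℝ) * Complex.exp
        ((s * (∑ i, (β i - α i) - ∑ i, if γ ∈ Icc (α i) (β i) then π else 0) : ℝ) * Complex.I) := by
  have hfactor (i : ι) := chordPow_div_chordPow_circleMap_one (hαβ i)
    (abs_lt.mpr ⟨by linarith [hγ.1, hαβ i, hπ i], by linarith [hγ.2, h0 i]⟩)
    (abs_lt.mpr ⟨by linarith [hγ.1, hπ i], by linarith [hγ.2, h0 i, hαβ i]⟩) (hγα i) (hγβ i) s
  simp only [arcProd, hfactor, Finset.prod_mul_distrib, ← Complex.exp_sum, ← Finset.sum_mul,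
    ← Complex.ofReal_sum, ← Finset.mul_sum, Finset.sum_sub_distrib, ← Complex.ofReal_prod]

lemma im_arcProd_mul_exp {γ : ℝ} (hγ : γ ∈ Ioo 0 π) (h0 : ∀ i, 0 ≤ α i)
    (hαβ : ∀ i, α i ≤ β i) (hπ : ∀ i, β i ≤ π) (hγα : ∀ i, γ ≠ α i) (hγβ : ∀ i, γ ≠ β i) :
    (arcProd s α β (circleMap 0 1 (2 * γ)) *
      Complex.exp ((s * (π - ∑ i, (β i - α i)) : ℝ) * Complex.I)).im =
      sin (s * (π - ∑ i, if γ ∈ Icc (α i) (β i) then π else 0)) *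
        ∏ i, |sin (α i - γ) / sin (β i - γ)| ^ s := by
  rw [arcProd_circleMap_one hγ h0 hαβ hπ hγα hγβ, mul_assoc, ← Complex.exp_add, ← add_mul,
    ← Complex.ofReal_add, ← mul_add, sub_add_sub_cancel', Complex.im_ofReal_mul,
    Complex.exp_ofReal_mul_I_im, mul_comm]

lemma sum_ite_mem_Icc_eq {M : Type*} [AddCommMonoid M] {γ : ℝ} {i : ι} (hi : γ ∈ Ioo (α i) (β i))
    (hγα : ∀ i, γ ≠ α i) (hγβ : ∀ i, γ ≠ β i)
    (hdisj : Pairwise (Disjoint on fun i ↦ Ioo (α i) (β i))) (c : M) :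
    (∑ j, if γ ∈ Icc (α j) (β j) then c else 0) = c := by
  rw [Finset.sum_eq_single_of_mem i (Finset.mem_univ i) fun j _ hji ↦ if_neg fun hj ↦ ?_,
    if_pos (Ioo_subset_Icc_self hi)]
  exact disjoint_left.mp (hdisj hji) ⟨hj.1.lt_of_ne' (hγα j), hj.2.lt_of_ne (hγβ j)⟩ hi

lemma sin_mul_prod_abs_rpow_eq {γ : ℝ} (hγ : γ ∈ Ioo 0 π) (h0 : ∀ i, 0 ≤ α i)
    (hαβ : ∀ i, α i ≤ β i) (hπ : ∀ i, β i ≤ π) (hγα : ∀ i, γ ≠ α i) (hγβ : ∀ i, γ ≠ β i)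
    (hdisj : Pairwise (Disjoint on fun i ↦ Ioo (α i) (β i))) :
    sin (s * (π - ∑ i, if γ ∈ Icc (α i) (β i) then π else 0)) *
        ∏ i, |sin (α i - γ) / sin (β i - γ)| ^ s =
      sin (s * π) * ∏ i, if γ ∈ Icc (α i) (β i) then 0
        else (sin (α i - γ) / sin (β i - γ)) ^ s := by
  by_cases hmem : ∃ i, γ ∈ Icc (α i) (β i)
  · obtain ⟨i, hi⟩ := hmem
    have hprod : (∏ i, if γ ∈ Icc (α i) (β i) then 0
        else (sin (α i - γ) / sin (β i - γ)) ^ s) = 0 :=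
      Finset.prod_eq_zero (Finset.mem_univ i) (if_pos hi)
    rw [sum_ite_mem_Icc_eq ⟨hi.1.lt_of_ne' (hγα i), hi.2.lt_of_ne (hγβ i)⟩ hγα hγβ hdisj, hprod,
      sub_self, mul_zero, sin_zero, zero_mul, mul_zero]
  · push Not at hmem
    simp only [hmem, if_false, Finset.sum_const_zero, sub_zero,
      abs_of_pos (sin_sub_div_sin_sub_pos hγ (h0 _) (hαβ _) (hπ _) (hmem _))]

lemma ae_im_arcProd_mul_exp_eq (h0 : ∀ i, 0 ≤ α i) (hαβ : ∀ i, α i ≤ β i) (hπ : ∀ i, β i ≤ π)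
    (hdisj : Pairwise (Disjoint on fun i ↦ Ioo (α i) (β i))) :
    ∀ᵐ γ : ℝ, γ ∈ uIoc 0 π → (arcProd s α β (circleMap 0 1 (2 * γ)) *
      Complex.exp ((s * (π - ∑ i, (β i - α i)) : ℝ) * Complex.I)).im =
      sin (s * π) * ∏ i, if γ ∈ Icc (α i) (β i) then 0
        else (sin (α i - γ) / sin (β i - γ)) ^ s := by
  filter_upwards [Measure.ae_ne volume π, ae_all_iff.mpr fun i ↦ Measure.ae_ne volume (α i),
    ae_all_iff.mpr fun i ↦ Measure.ae_ne volume (β i)] with γ hγπ hγα hγβ hγ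
  rw [uIoc_of_le pi_pos.le] at hγ
  have hγ_lt : γ ∈ Ioo 0 π := ⟨hγ.1, hγ.2.lt_of_ne hγπ⟩
  rw [im_arcProd_mul_exp hγ_lt h0 hαβ hπ hγα hγβ,
    sin_mul_prod_abs_rpow_eq hγ_lt h0 hαβ hπ hγα hγβ hdisj]

lemma integral_im_arcProd_mul (hs : s ∈ Ioo 0 1) (h0 : ∀ i, 0 ≤ α i) (hαβ : ∀ i, α i ≤ β i)
    (hπ : ∀ i, β i ≤ π) (hdisj : Pairwise (Disjoint on fun i ↦ Ioo (α i) (β i))) (c : ℂ) :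
    ∫ γ in (0 : ℝ)..π, (arcProd s α β (circleMap 0 1 (2 * γ)) * c).im = π * c.im := by
  have hmean := circleAverage_arcProd hs h0 hαβ hπ hdisj
  rw [circleAverage_eq_integral_two_mul, inv_smul_eq_iff₀ pi_ne_zero] at hmean
  have him := Complex.imCLM.intervalIntegral_comp_comm
    ((intervalIntegrable_arcProd hs h0 hαβ hπ hdisj 0 π).mul_const c)
  rw [intervalIntegral.integral_mul_const, hmean, smul_mul_assoc, one_mul, map_smul] at him
  exact him

theorem stmt_1_general (hs : s ∈ Ioo 0 1) (h0 : ∀ i, 0 ≤ α i) (hαβ : ∀ i, α i ≤ β i)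
    (hπ : ∀ i, β i ≤ π) (hdisj : Pairwise (Disjoint on fun i ↦ Ioo (α i) (β i))) :
    (1 / π) * ∫ γ in (0 : ℝ)..π, ∏ i, (if γ ∈ Icc (α i) (β i) then 0
        else (sin (α i - γ) / sin (β i - γ)) ^ s) =
      sin (s * (π - ∑ i, (β i - α i))) / sin (s * π) := by
  have hsin : sin (s * π) ≠ 0 :=
    (sin_pos_of_pos_of_lt_pi (mul_pos hs.1 pi_pos) (mul_lt_of_lt_one_left pi_pos hs.2)).ne'
  have hmean := integral_im_arcProd_mul hs h0 hαβ hπ hdisj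
    (Complex.exp ((s * (π - ∑ i, (β i - α i)) : ℝ) * Complex.I))
  rw [intervalIntegral.integral_congr_ae (ae_im_arcProd_mul_exp_eq h0 hαβ hπ hdisj),
    intervalIntegral.integral_const_mul, Complex.exp_ofReal_mul_I_im] at hmean
  rw [eq_div_iff hsin, one_div_mul_eq_div, div_mul_eq_mul_div, div_eq_iff pi_ne_zero, mul_comm,
    hmean, mul_comm]

end ArcProd

section Chain

variable {p : ℕ} {E : Type*} [Preorder E] {α β : Fin p → E}

lemma right_le_left_of_chain (hαβ : ∀ i, α i ≤ β i)
    (hβα : ∀ i : Fin p, ∀ h : i.val + 1 < p, β i ≤ α ⟨i.val + 1, h⟩) {i j : Fin p} (hij : i < j) :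
    β i ≤ α j := by
  obtain ⟨j, hj⟩ := j
  induction j with
  | zero => exact absurd hij (Nat.not_lt_zero _)
  | succ j ih =>
    have hj_pred : j < p := by omega
    rcases (Nat.lt_succ_iff.mp hij).eq_or_lt with h | h
    · obtain rfl : i = ⟨j, hj_pred⟩ := Fin.ext h
      exact hβα _ hj
    · exact (ih hj_pred h).trans ((hαβ _).trans (hβα ⟨j, hj_pred⟩ hj))

lemma monotone_left_of_chain (hαβ : ∀ i, α i ≤ β i)
    (hβα : ∀ i : Fin p, ∀ h : i.val + 1 < p, β i ≤ α ⟨i.val + 1, h⟩) : Monotone α :=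
  monotone_iff_forall_lt.mpr fun i _ hij ↦ (hαβ i).trans (right_le_left_of_chain hαβ hβα hij)

lemma monotone_right_of_chain (hαβ : ∀ i, α i ≤ β i)
    (hβα : ∀ i : Fin p, ∀ h : i.val + 1 < p, β i ≤ α ⟨i.val + 1, h⟩) : Monotone β :=
  monotone_iff_forall_lt.mpr fun _ j hij ↦ (right_le_left_of_chain hαβ hβα hij).trans (hαβ j)

lemma pairwise_disjoint_Ioo_of_chain (hαβ : ∀ i, α i ≤ β i)
    (hβα : ∀ i : Fin p, ∀ h : i.val + 1 < p, β i ≤ α ⟨i.val + 1, h⟩) :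
    Pairwise (Disjoint on fun i ↦ Ioo (α i) (β i)) :=
  (pairwise_disjoint_on _).mpr fun _ _ hij ↦ disjoint_left.mpr fun _ hi hj ↦
    (hi.2.trans_le (right_le_left_of_chain hαβ hβα hij)).not_gt hj.1

end Chain

/-- **Integral identity (Lemma 5.2).** For `p ≥ 1`,
`0 ≤ α₁ ≤ β₁ ≤ ⋯ ≤ α_p ≤ β_p ≤ π` and `u ∈ (0, 1/2)`,
`(1/π)∫₀^π ∏ᵢ (sin(αᵢ−γ)/sin(βᵢ−γ))^{2u} 1{γ∉[αᵢ,βᵢ]} dγ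
  = sin(2u(π − ∑ᵢ(βᵢ−αᵢ)))/sin(2πu)`,
where the integrand is `0` whenever `γ` lies in one of the intervals `[αᵢ,βᵢ]`. -/
theorem stmt_1 (p : ℕ) (hp : 0 < p) (α β : Fin p → ℝ) (u : ℝ)
    (hu : u ∈ Set.Ioo (0:ℝ) (1/2))
    (h0 : 0 ≤ α ⟨0, hp⟩)
    (hαβ : ∀ i, α i ≤ β i)
    (hβα : ∀ i : Fin p, ∀ h : i.val + 1 < p, β i ≤ α ⟨i.val + 1, h⟩)
    (hπ : β ⟨p - 1, Nat.sub_lt hp one_pos⟩ ≤ π) :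
    (1/π) * ∫ γ in (0:ℝ)..π,
        ∏ i, (if γ ∈ Set.Icc (α i) (β i) then 0
              else (Real.sin (α i - γ) / Real.sin (β i - γ)) ^ (2*u))
      = Real.sin (2*u*(π - ∑ i, (β i - α i))) / Real.sin (2*π*u) := by
  rw [mul_right_comm 2 π u]
  exact stmt_1_general ⟨by linarith [hu.1], by linarith [hu.2]⟩
    (fun i ↦ h0.trans (monotone_left_of_chain hαβ hβα (Nat.zero_le i))) hαβ
    (fun i ↦ (monotone_right_of_chain hαβ hβα (Nat.le_sub_one_of_lt i.isLt)).trans hπ)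
    (pairwise_disjoint_Ioo_of_chain hαβ hβα)
end
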